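/- arXiv:1607.00048 — 2 statements merged into one kernel-verified Lean document; each statement's English description precedes it below -/
import Mathlib

section
/- Let S be a set of n points in the plane with the property that at most n − x of them are collinear (x ≥ 0). Then the number of lines spanned by S is at least c·x·n for an absolute constant c > 0. -/
namespace EB
open Finset

/-- Coefficients (slope, intercept) of the line through the graph points over `e.1`, `e.2`. -/
noncomputable def LN (h : ℝ → ℝ) (e : ℝ × ℝ) : ℝ × ℝ :=
  ((h e.2 - h e.1) / (e.2 - e.1), h e.1 - (h e.2 - h e.1) / (e.2 - e.1) * e.1)

/-- Value at `t` of the affine function with coefficients `l`. -/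
def Y (l : ℝ × ℝ) (t : ℝ) : ℝ := l.1 * t + l.2

lemma Y_left (h : ℝ → ℝ) (e : ℝ × ℝ) : Y (LN h e) e.1 = h e.1 := by
  simp [Y, LN]

lemma Y_right (h : ℝ → ℝ) (e : ℝ × ℝ) (he : e.1 < e.2) : Y (LN h e) e.2 = h e.2 := by
  have : e.2 - e.1 ≠ 0 := by linarith
  simp only [Y, LN]; field_simp; ring

lemma LN_neg (h : ℝ → ℝ) (e : ℝ × ℝ) : LN (fun t => - h t) e = - LN h e := by
  ext <;> simp [LN] <;> ring

lemma Y_neg (l : ℝ × ℝ) (t : ℝ) : Y (-l) t = - Y l t := by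
  simp [Y]; ring

/-- two affine functions agreeing at two points agree -/
lemma eq_of_Y {l m : ℝ × ℝ} {s t : ℝ} (hst : s ≠ t) (h1 : Y l s = Y m s) (h2 : Y l t = Y m t) :
    l = m := by
  simp only [Y] at h1 h2
  have : (l.1 - m.1) * (s - t) = 0 := by linarith
  have h3 : l.1 = m.1 := by
    rcases mul_eq_zero.1 this with h | h
    · linarith
    · exact absurd (by linarith) hst
  ext
  · exact h3
  · rw [h3] at h1; linarith

lemma aff_cross {l m : ℝ × ℝ} {s t : ℝ} (hst : s < t) (h1 : Y l s < Y m s) (h2 : Y m t < Y l t) :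
    ∃ r, s < r ∧ r < t ∧ Y l r = Y m r := by
  simp only [Y] at *
  have hp : 0 < l.1 - m.1 := by
    by_contra hc
    nlinarith
  refine ⟨(m.2 - l.2) / (l.1 - m.1), ?_, ?_, ?_⟩
  · rw [lt_div_iff₀ hp]; linarith
  · rw [div_lt_iff₀ hp]; linarith
  · field_simp; ring

/-- Common hypotheses: edges of a geometric graph with no vertex inside an edge. -/
structure Good (X : Finset ℝ) (h : ℝ → ℝ) (E : Finset (ℝ × ℝ)) : Prop where
  mem1 : ∀ e ∈ E, e.1 ∈ X
  mem2 : ∀ e ∈ E, e.2 ∈ X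
  lt : ∀ e ∈ E, e.1 < e.2
  nov : ∀ e ∈ E, ∀ z ∈ X, e.1 < z → z < e.2 → h z ≠ Y (LN h e) z

/-- `e`, `f` cross at an interior point. -/
def Cross (h : ℝ → ℝ) (e f : ℝ × ℝ) : Prop :=
  e ≠ f ∧ ∃ t, e.1 < t ∧ t < e.2 ∧ f.1 < t ∧ t < f.2 ∧ Y (LN h e) t = Y (LN h f) t

lemma Good.neg {X h E} (H : Good X h E) : Good X (fun t => - h t) E :=
  ⟨H.mem1, H.mem2, H.lt, fun e he z hz h1 h2 h3 => H.nov e he z hz h1 h2 (by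
    rw [LN_neg, Y_neg] at h3; linarith)⟩

lemma Cross.neg {h e f} (H : Cross (fun t => - h t) e f) : Cross h e f := by
  obtain ⟨h0, t, h1, h2, h3, h4, h5⟩ := H
  refine ⟨h0, t, h1, h2, h3, h4, ?_⟩
  rw [LN_neg, LN_neg, Y_neg, Y_neg] at h5
  linarith

/-- Two edges from the same left endpoint with equal line coincide. -/
lemma Good.eq_of_LN {X h E} (H : Good X h E) {e f} (he : e ∈ E) (hf : f ∈ E) (h1 : e.1 = f.1)
    (h2 : LN h e = LN h f) : e = f := by
  have key : ∀ e ∈ E, ∀ f ∈ E, e.1 = f.1 → LN h e = LN h f → ¬ e.2 < f.2 := by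
    intro e he f hf h1 h2 hlt
    refine H.nov f hf e.2 (H.mem2 e he) (h1 ▸ H.lt e he) hlt ?_
    rw [← h2, Y_right h e (H.lt e he)]
  ext
  · exact h1
  · exact le_antisymm (not_lt.1 (key f hf e he h1.symm h2.symm)) (not_lt.1 (key e he f hf h1 h2))

lemma Good.eq_of_slope {X h E} (H : Good X h E) {e f} (he : e ∈ E) (hf : f ∈ E) (h1 : e.1 = f.1)
    (h2 : (LN h e).1 = (LN h f).1) : e = f := by
  apply H.eq_of_LN he hf h1
  have a := Y_left h e
  have b := Y_left h f
  rw [← h1] at b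
  simp only [Y] at a b
  ext
  · exact h2
  · rw [h2] at a; linarith

/-- Vertex `z` sees the edge `e` directly below. -/
def Sees (h : ℝ → ℝ) (E : Finset (ℝ × ℝ)) (z : ℝ) (e : ℝ × ℝ) : Prop :=
  e.1 < z ∧ z < e.2 ∧ Y (LN h e) z < h z ∧
    ∀ g ∈ E, g.1 < z → z < g.2 → Y (LN h g) z < h z → Y (LN h g) z ≤ Y (LN h e) z

lemma key {X h E} (H : Good X h E) (hC : ∀ e ∈ E, ∀ f ∈ E, ¬ Cross h e f) {e f}
    (he : e ∈ E) (hf : f ∈ E) (h1 : e.1 = f.1) (h2 : f.2 < e.2) (hs : (LN h e).1 < (LN h f).1)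
    (hn : ∀ g ∈ E, g.1 = e.1 → (LN h e).1 < (LN h g).1 → (LN h f).1 ≤ (LN h g).1) :
    ∃ z ∈ X, Sees h E z e := by
  have cr : ∀ e ∈ E, ∀ f ∈ E, ∀ s t, s < t → e.1 ≤ s → f.1 ≤ s → t ≤ e.2 → t ≤ f.2 →
      Y (LN h e) s < Y (LN h f) s → Y (LN h f) t < Y (LN h e) t → False := by
    intro e he f hf s t hst a1 a2 a3 a4 a5 a6
    obtain ⟨r, b1, b2, b3⟩ := aff_cross hst a5 a6
    refine hC e he f hf ⟨?_, r, by linarith, by linarith, by linarith, by linarith, b3⟩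
    rintro rfl; linarith
  have yl := Y_left h e
  have yf := Y_left h f
  have hef : ∀ t, e.1 < t → Y (LN h e) t < Y (LN h f) t := by
    intro t ht
    rw [← h1] at yf
    simp only [Y] at yl yf ⊢
    nlinarith
  set Z := X.filter (fun z => e.1 < z ∧ z ≤ f.2 ∧ Y (LN h e) z < h z ∧ h z ≤ Y (LN h f) z) with hZ
  have hflt := H.lt f hf
  have hne : Z.Nonempty := ⟨f.2, by
    simp only [hZ, mem_filter]
    have := Y_right h f hflt
    exact ⟨H.mem2 f hf, by linarith, le_rfl, this ▸ hef _ (by linarith), this.ge⟩⟩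
  obtain ⟨z, hz, hmin⟩ := Z.exists_min_image id hne
  simp only [hZ, mem_filter, id] at hz hmin
  obtain ⟨hzX, z1, z2, z3, z4⟩ := hz
  refine ⟨z, hzX, z1, by linarith, z3, ?_⟩
  intro g hg g1 g2 g3
  by_contra hcon
  push Not at hcon
  rcases lt_trichotomy g.1 e.1 with ha | ha | ha
  · rcases lt_trichotomy (Y (LN h g) e.1) (h e.1) with hb | hb | hb
    · exact cr g hg e he e.1 z z1 ha.le le_rfl g2.le (by linarith) (by linarith) hcon
    · exact H.nov g hg e.1 (H.mem1 e he) ha (by linarith) hb.symm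
    · refine cr f hf g hg e.1 z z1 h1.ge ha.le z2 g2.le ?_ (by linarith)
      rw [h1, yf, ← h1]; exact hb
  · have yg := Y_left h g
    have s1 : (LN h e).1 < (LN h g).1 := by
      rw [ha] at yg
      simp only [Y] at yg yl hcon
      by_contra hc
      nlinarith
    have s2 := hn g hg ha s1
    have : Y (LN h f) z ≤ Y (LN h g) z := by
      rw [ha] at yg
      rw [← h1] at yf
      simp only [Y] at yg yf ⊢
      nlinarith
    linarith
  · have yg := Y_left h g
    have := hmin g.1
    by_cases c1 : Y (LN h e) g.1 < h g.1
    · by_cases c2 : h g.1 ≤ Y (LN h f) g.1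
      · have := hmin g.1 ⟨H.mem1 g hg, ha, by linarith, c1, c2⟩
        linarith
      · push Not at c2
        exact cr f hf g hg g.1 z g1 (by linarith) le_rfl z2 g2.le (by linarith) (by linarith)
    · rcases eq_or_lt_of_le (not_lt.1 c1) with c2 | c2
      · exact H.nov e he g.1 (H.mem1 g hg) ha (by linarith) c2
      · exact cr g hg e he g.1 z g1 le_rfl ha.le g2.le (by linarith) (by linarith) hcon

lemma card_sees {X : Finset ℝ} {h E} (hC : ∀ e ∈ E, ∀ f ∈ E, ¬ Cross h e f) (F : Finset (ℝ × ℝ))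
    (hF : F ⊆ E) (hs : ∀ e ∈ F, ∃ z ∈ X, Sees h E z e) : F.card ≤ X.card := by
  classical
  choose! z hz using hs
  refine Finset.card_le_card_of_injOn z (fun e he => (hz e he).1) ?_
  intro e he f hf hef
  obtain ⟨a1, a2, a3, a4⟩ := (hz e he).2
  obtain ⟨b1, b2, b3, b4⟩ := (hz f hf).2
  rw [← hef] at b1 b2 b3 b4
  by_contra hne
  exact hC e (hF he) f (hF hf) ⟨hne, z e, a1, a2, b1, b2,
    le_antisymm (b4 e (hF he) a1 a2 a3) (a4 f (hF hf) b1 b2 b3)⟩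

lemma planar {X h E} (H : Good X h E) (hC : ∀ e ∈ E, ∀ f ∈ E, ¬ Cross h e f) :
    E.card ≤ 3 * X.card := by
  classical
  set A := E.filter (fun e => ∀ g ∈ E, g.1 = e.1 → (LN h g).1 ≤ (LN h e).1) with hA
  have cA : A.card ≤ X.card := by
    refine Finset.card_le_card_of_injOn Prod.fst (fun e he => H.mem1 e (mem_filter.1 he).1) ?_
    intro e he f hf hef
    obtain ⟨e1, e2⟩ := mem_filter.1 he
    obtain ⟨f1, f2⟩ := mem_filter.1 hf
    exact H.eq_of_slope e1 f1 hef (le_antisymm (f2 e e1 hef) (e2 f f1 hef.symm))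
  set D := E.filter (fun e => ∃ z ∈ X, Sees h E z e) with hD
  have cD : D.card ≤ X.card :=
    card_sees hC D (filter_subset _ _) (fun e he => (mem_filter.1 he).2)
  have H' := H.neg
  have hC' : ∀ e ∈ E, ∀ f ∈ E, ¬ Cross (fun t => - h t) e f :=
    fun e he f hf hc => hC e he f hf hc.neg
  set U := E.filter (fun e => ∃ z ∈ X, Sees (fun t => - h t) E z e) with hU
  have cU : U.card ≤ X.card :=
    card_sees hC' U (filter_subset _ _) (fun e he => (mem_filter.1 he).2)
  set B := (E \ A) \ D with hB
  have nx : ∀ e ∈ E \ A, ∃ f ∈ E, f.1 = e.1 ∧ (LN h e).1 < (LN h f).1 ∧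
      ∀ g ∈ E, g.1 = e.1 → (LN h e).1 < (LN h g).1 → (LN h f).1 ≤ (LN h g).1 := by
    intro e he
    obtain ⟨e1, e2⟩ := mem_sdiff.1 he
    have : ∃ g ∈ E, g.1 = e.1 ∧ (LN h e).1 < (LN h g).1 := by
      by_contra hc
      push Not at hc
      exact e2 (mem_filter.2 ⟨e1, hc⟩)
    obtain ⟨g, g1, g2, g3⟩ := this
    obtain ⟨f, f1, f2⟩ := (E.filter (fun g => g.1 = e.1 ∧ (LN h e).1 < (LN h g).1)).exists_min_image
      (fun g => (LN h g).1) ⟨g, mem_filter.2 ⟨g1, g2, g3⟩⟩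
    obtain ⟨f3, f4, f5⟩ := mem_filter.1 f1
    exact ⟨f, f3, f4, f5, fun g hg a b => f2 g (mem_filter.2 ⟨hg, a, b⟩)⟩
  choose! s s1 s2 s3 s4 using nx
  have cB : B.card ≤ U.card := by
    refine Finset.card_le_card_of_injOn s ?_ ?_
    · intro e he
      obtain ⟨e1, e2⟩ := mem_sdiff.1 he
      have eE := (mem_sdiff.1 e1).1
      have hlt : e.2 < (s e).2 := by
        by_contra hc
        rcases eq_or_lt_of_le (not_lt.1 hc) with hc | hc
        · have : s e = e := Prod.ext (s2 e e1) hc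
          have := s3 e e1
          simp_all
        · exact e2 (mem_filter.2 ⟨eE, key H hC eE (s1 e e1) (s2 e e1).symm hc (s3 e e1) (s4 e e1)⟩)
      refine mem_filter.2 ⟨s1 e e1, key H' hC' (s1 e e1) eE (s2 e e1) hlt ?_ ?_⟩
      · simp only [LN_neg, Prod.fst_neg]; linarith [s3 e e1]
      · intro g hg g1 g2
        simp only [LN_neg, Prod.fst_neg] at g2 ⊢
        by_contra hc
        have := s4 e e1 g hg (g1.trans (s2 e e1)) (by linarith)
        linarith
    · intro e he f hf hef
      obtain ⟨e1, e2⟩ := mem_sdiff.1 he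
      obtain ⟨f1, f2⟩ := mem_sdiff.1 hf
      have eE := (mem_sdiff.1 e1).1
      have fE := (mem_sdiff.1 f1).1
      have h1 : e.1 = f.1 := by rw [← s2 e e1, ← s2 f f1, hef]
      have a1 := s3 e e1
      have a2 := s3 f f1
      have b1 := s4 e e1 f fE h1.symm
      have b2 := s4 f f1 e eE h1
      rw [hef] at a1 b1
      apply H.eq_of_slope eE fE h1
      rcases lt_trichotomy (LN h e).1 (LN h f).1 with c | c | c
      · linarith [b1 c]
      · exact c
      · linarith [b2 c]
  have : E ⊆ A ∪ (D ∪ B) := by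
    intro e he
    simp only [hB, mem_union, mem_sdiff]
    tauto
  have := card_le_card this
  have := card_union_le A (D ∪ B)
  have := card_union_le D B
  omega

lemma Good.sub {X h E E'} (H : Good X h E) (hs : E' ⊆ E) : Good X h E' :=
  ⟨fun e he => H.mem1 e (hs he), fun e he => H.mem2 e (hs he), fun e he => H.lt e (hs he),
    fun e he => H.nov e (hs he)⟩

open Classical in
/-- Ordered crossing pairs. -/
noncomputable def CR (h : ℝ → ℝ) (E : Finset (ℝ × ℝ)) : Finset ((ℝ × ℝ) × (ℝ × ℝ)) :=
  (E ×ˢ E).filter (fun c => Cross h c.1 c.2)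

lemma weak_crossing {X h E} (H : Good X h E) : E.card ≤ 3 * X.card + (CR h E).card := by
  classical
  have h1 : (E \ (CR h E).image Prod.fst).card ≤ 3 * X.card := by
    apply planar (H.sub sdiff_subset)
    intro e he f hf hc
    obtain ⟨e1, e2⟩ := mem_sdiff.1 he
    refine e2 (mem_image.2 ⟨(e, f), ?_, rfl⟩)
    exact mem_filter.2 ⟨mem_product.2 ⟨e1, (mem_sdiff.1 hf).1⟩, hc⟩
  have h2 := card_le_card_sdiff_add_card (s := E) (t := (CR h E).image Prod.fst)
  have h3 := card_image_le (s := CR h E) (f := Prod.fst)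
  omega

lemma weight {X A : Finset ℝ} (hA : A ⊆ X) (p : ℝ) :
    ∑ T ∈ X.powerset, (p ^ T.card * (1 - p) ^ (X \ T).card) * (if A ⊆ T then 1 else 0)
      = p ^ A.card := by
  classical
  have := Finset.prod_add (fun _ : ℝ => p) (fun i => if i ∈ A then 0 else 1 - p) X
  have h2 : ∏ i ∈ X, (p + if i ∈ A then 0 else 1 - p) = p ^ A.card := by
    have : ∀ i ∈ X, (p + if i ∈ A then 0 else 1 - p) = if i ∈ A then p else 1 := by
      intro i _; split_ifs <;> ring
    rw [prod_congr rfl this, prod_ite, prod_const, prod_const_one, mul_one,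
      filter_mem_eq_inter, inter_eq_right.2 hA]
  rw [← h2, this]
  refine sum_congr rfl fun T hT => ?_
  rw [prod_const, mul_assoc]
  congr 1
  split_ifs with hs
  · rw [mul_one, ← prod_const]
    refine prod_congr rfl fun i hi => ?_
    rw [if_neg (fun hi' => (mem_sdiff.1 hi).2 (hs hi'))]
  · rw [mul_zero]
    obtain ⟨i, hi, hi'⟩ := not_subset.1 hs
    symm
    apply prod_eq_zero (mem_sdiff.2 ⟨hA hi, hi'⟩)
    rw [if_pos hi]

lemma weight_sum {ι : Type*} {X : Finset ℝ} (I : Finset ι) (A : ι → Finset ℝ) (k : ℕ)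
    (hA : ∀ i ∈ I, A i ⊆ X) (hk : ∀ i ∈ I, (A i).card = k) (p : ℝ) :
    ∑ T ∈ X.powerset, (p ^ T.card * (1 - p) ^ (X \ T).card) *
      ((I.filter (fun i => A i ⊆ T)).card : ℝ) = I.card * p ^ k := by
  classical
  have : ∀ T : Finset ℝ, ((I.filter (fun i => A i ⊆ T)).card : ℝ)
      = ∑ i ∈ I, if A i ⊆ T then 1 else 0 := by
    intro T; simp
  simp_rw [this, mul_sum]
  rw [sum_comm]
  rw [sum_congr rfl (fun i hi => (weight (hA i hi) p).trans (by rw [hk i hi]))]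
  simp

lemma Cross.four {X h E} (H : Good X h E) {e f} (he : e ∈ E) (hf : f ∈ E) (hc : Cross h e f) :
    ({e.1, e.2, f.1, f.2} : Finset ℝ).card = 4 := by
  obtain ⟨hne, t, t1, t2, t3, t4, t5⟩ := hc
  have e0 := Y_left h e
  have f0 := Y_left h f
  have e9 := Y_right h e (H.lt e he)
  have f9 := Y_right h f (H.lt f hf)
  have n1 : e.1 ≠ f.1 := by
    intro h1
    refine hne (H.eq_of_LN he hf h1 (eq_of_Y t1.ne ?_ t5))
    rw [e0, h1, f0]
  have n2 : e.2 ≠ f.2 := by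
    intro h2
    have hl : LN h e = LN h f := eq_of_Y t2.ne t5 (by rw [e9, h2, f9])
    rcases lt_trichotomy e.1 f.1 with c | c | c
    · exact H.nov e he f.1 (H.mem1 f hf) c (by linarith) (by rw [hl, f0])
    · exact n1 c
    · exact H.nov f hf e.1 (H.mem1 e he) c (by linarith) (by rw [← hl, e0])
  have n3 : e.1 ≠ e.2 := (H.lt e he).ne
  have n4 : f.1 ≠ f.2 := (H.lt f hf).ne
  have n5 : e.1 ≠ f.2 := by intro h; linarith
  have n6 : e.2 ≠ f.1 := by intro h; linarith
  rw [card_insert_of_notMem (by simp [n1, n3, n5]), card_insert_of_notMem (by simp [n2, n6]),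
    card_pair n4]

lemma crossing {X h E} (H : Good X h E) {p : ℝ} (p0 : 0 ≤ p) (p1 : p ≤ 1) :
    (E.card : ℝ) * p ^ 2 ≤ 3 * (X.card * p ^ 1) + (CR h E).card * p ^ 4 := by
  classical
  rw [← weight_sum (X := X) E (fun e => {e.1, e.2}) 2
      (fun e he => by
        intro i hi
        simp only [mem_insert, mem_singleton] at hi
        rcases hi with rfl | rfl
        exacts [H.mem1 e he, H.mem2 e he]) (fun e he => card_pair (H.lt e he).ne),
    ← weight_sum (X := X) X (fun e => {e}) 1 (fun e he => by simpa using he) (fun e he => by simp),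
    ← weight_sum (X := X) (CR h E) (fun c => {c.1.1, c.1.2, c.2.1, c.2.2}) 4
      (fun c hc => by
        have := mem_product.1 (mem_filter.1 hc).1
        intro i hi
        simp only [mem_insert, mem_singleton] at hi
        rcases hi with rfl | rfl | rfl | rfl
        exacts [H.mem1 _ this.1, H.mem2 _ this.1, H.mem1 _ this.2, H.mem2 _ this.2])
      (fun c hc => by
        have := mem_product.1 (mem_filter.1 hc).1
        exact Cross.four H this.1 this.2 (mem_filter.1 hc).2), mul_sum, ← sum_add_distrib]
  refine sum_le_sum fun T hT => ?_
  have hTX := mem_powerset.1 hT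
  set ET := E.filter (fun e => ({e.1, e.2} : Finset ℝ) ⊆ T) with hET
  have HT : Good T h ET := by
    refine ⟨fun e he => (mem_filter.1 he).2 (by simp), fun e he => (mem_filter.1 he).2 (by simp),
      fun e he => H.lt e (mem_filter.1 he).1,
      fun e he z hz => H.nov e (mem_filter.1 he).1 z (hTX hz)⟩
  have w := weak_crossing HT
  have a1 : (X.filter (fun e => ({e} : Finset ℝ) ⊆ T)) = T := by
    ext i; simp only [mem_filter, singleton_subset_iff]
    exact ⟨fun h => h.2, fun h => ⟨hTX h, h⟩⟩
  have a2 : CR h ET ⊆ (CR h E).filter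
      (fun c => ({c.1.1, c.1.2, c.2.1, c.2.2} : Finset ℝ) ⊆ T) := by
    intro c hc
    obtain ⟨c1, c2⟩ := mem_filter.1 hc
    obtain ⟨c3, c4⟩ := mem_product.1 c1
    obtain ⟨c5, c6⟩ := mem_filter.1 c3
    obtain ⟨c7, c8⟩ := mem_filter.1 c4
    refine mem_filter.2 ⟨mem_filter.2 ⟨mem_product.2 ⟨c5, c7⟩, c2⟩, ?_⟩
    intro i hi
    simp only [mem_insert, mem_singleton] at hi
    rcases hi with rfl | rfl | rfl | rfl
    exacts [c6 (by simp), c6 (by simp), c8 (by simp), c8 (by simp)]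
  have a3 := card_le_card a2
  rw [a1]
  have a4 : (ET.card : ℝ) ≤ 3 * T.card + ((CR h E).filter
      (fun c => ({c.1.1, c.1.2, c.2.1, c.2.2} : Finset ℝ) ⊆ T)).card := by
    exact_mod_cast w.trans (by omega)
  have wn : 0 ≤ p ^ T.card * (1 - p) ^ (X \ T).card :=
    mul_nonneg (pow_nonneg p0 _) (pow_nonneg (by linarith) _)
  nlinarith [mul_le_mul_of_nonneg_left a4 wn]

/-- Points of the configuration on a line. -/
noncomputable def R (X : Finset ℝ) (h : ℝ → ℝ) (l : ℝ × ℝ) : Finset ℝ :=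
  X.filter (fun z => h z = Y l z)

lemma LN_eq {h : ℝ → ℝ} {l e : ℝ × ℝ} (he : e.1 < e.2) (h1 : h e.1 = Y l e.1)
    (h2 : h e.2 = Y l e.2) : LN h e = l :=
  eq_of_Y he.ne ((Y_left h e).trans h1) ((Y_right h e he).trans h2)

open Classical in
/-- Segments between consecutive points on the lines of `L`. -/
noncomputable def EL (X : Finset ℝ) (h : ℝ → ℝ) (L : Finset (ℝ × ℝ)) : Finset (ℝ × ℝ) :=
  (X ×ˢ X).filter (fun e => e.1 < e.2 ∧ LN h e ∈ L ∧
    ∀ z ∈ X, e.1 < z → z < e.2 → h z ≠ Y (LN h e) z)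

lemma mem_EL {X h L e} : e ∈ EL X h L ↔ (e.1 ∈ X ∧ e.2 ∈ X) ∧ e.1 < e.2 ∧ LN h e ∈ L ∧
    ∀ z ∈ X, e.1 < z → z < e.2 → h z ≠ Y (LN h e) z := by
  simp [EL]

lemma good_EL (X h L) : Good X h (EL X h L) :=
  ⟨fun _ he => (mem_EL.1 he).1.1, fun _ he => (mem_EL.1 he).1.2, fun _ he => (mem_EL.1 he).2.1,
    fun _ he => (mem_EL.1 he).2.2.2⟩

/-- Consecutive segments on one line sharing an interior abscissa coincide. -/
lemma EL_unique {X h L e f} (he : e ∈ EL X h L) (hf : f ∈ EL X h L) (hl : LN h e = LN h f) {t : ℝ}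
    (h1 : e.1 < t) (h2 : t < e.2) (h3 : f.1 < t) (h4 : t < f.2) : e = f := by
  have H := good_EL X h L
  have key : ∀ e ∈ EL X h L, ∀ f ∈ EL X h L, LN h e = LN h f → e.1 < t → t < e.2 → f.1 < t →
      t < f.2 → ¬ e.1 < f.1 := by
    intro e he f hf hl h1 h2 h3 h4 hc
    exact H.nov e he f.1 (H.mem1 f hf) hc (by linarith) (by rw [hl, Y_left])
  exact H.eq_of_LN he hf (le_antisymm (not_lt.1 (key f hf e he hl.symm h3 h4 h1 h2))
    (not_lt.1 (key e he f hf hl h1 h2 h3 h4))) hl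

lemma card_CR (X h L) : (CR h (EL X h L)).card ≤ L.card ^ 2 := by
  classical
  rw [sq, ← card_product]
  refine card_le_card_of_injOn (fun c => (LN h c.1, LN h c.2)) ?_ ?_
  · intro c hc
    have := mem_product.1 (mem_filter.1 hc).1
    exact mem_product.2 ⟨(mem_EL.1 this.1).2.2.1, (mem_EL.1 this.2).2.2.1⟩
  · intro c hc d hd hcd
    obtain ⟨c0, cn, t, t1, t2, t3, t4, t5⟩ := mem_filter.1 hc
    obtain ⟨d0, dn, s, s1, s2, s3, s4, s5⟩ := mem_filter.1 hd
    have c1 := mem_product.1 c0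
    have d1 := mem_product.1 d0
    simp only [Prod.mk.injEq] at hcd
    obtain ⟨l1, l2⟩ := hcd
    have hst : s = t := by
      by_contra hst
      rw [← l1, ← l2] at s5
      exact cn (EL_unique c1.1 c1.2 (eq_of_Y hst s5 t5) t1 t2 t3 t4)
    subst hst
    exact Prod.ext (EL_unique c1.1 d1.1 l1 t1 t2 s1 s2) (EL_unique c1.2 d1.2 l2 t3 t4 s3 s4)

lemma card_EL {X h L} {j : ℕ} (hL : ∀ l ∈ L, j + 1 ≤ (R X h l).card) :
    L.card * j ≤ (EL X h L).card := by
  classical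
  rw [card_eq_sum_card_fiberwise (f := LN h) (t := L) (fun e he => (mem_EL.1 he).2.2.1),
    ← smul_eq_mul, ← sum_const]
  refine sum_le_sum fun l hl => ?_
  have h1 := hL l hl
  have hne : (R X h l).Nonempty := card_pos.1 (by omega)
  set m := (R X h l).max' hne with hm
  have h2 : j ≤ ((R X h l).erase m).card := by
    rw [card_erase_of_mem (max'_mem _ _)]; omega
  refine h2.trans ?_
  have nx : ∀ u ∈ (R X h l).erase m, ∃ v ∈ R X h l, u < v ∧ ∀ z ∈ R X h l, u < z → v ≤ z := by
    intro u hu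
    obtain ⟨u1, u2⟩ := mem_erase.1 hu
    have : u < m := lt_of_le_of_ne (le_max' _ _ u2) u1
    obtain ⟨v, v1, v2⟩ := ((R X h l).filter (fun z => u < z)).exists_min_image id
      ⟨m, mem_filter.2 ⟨max'_mem _ _, this⟩⟩
    obtain ⟨v3, v4⟩ := mem_filter.1 v1
    exact ⟨v, v3, v4, fun z hz huz => v2 z (mem_filter.2 ⟨hz, huz⟩)⟩
  choose! s s1 s2 s3 using nx
  refine card_le_card_of_injOn (fun u => (u, s u)) ?_ ?_
  · intro u hu
    have u2 := mem_filter.1 (mem_erase.1 hu).2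
    have v2 := mem_filter.1 (s1 u hu)
    have hl' : LN h (u, s u) = l := LN_eq (s2 u hu) u2.2 v2.2
    refine mem_filter.2 ⟨mem_EL.2 ⟨⟨u2.1, v2.1⟩, s2 u hu, hl'.symm ▸ hl, ?_⟩, hl'⟩
    intro z hz z1 z2 z3
    rw [hl'] at z3
    have := s3 u hu z (mem_filter.2 ⟨hz, z3⟩) z1
    simp only at z2
    linarith
  · intro u _ v _ huv
    exact (Prod.mk.inj huv).1

/-- Szemerédi–Trotter bound for rich lines. -/
lemma rich {X : Finset ℝ} {h : ℝ → ℝ} {L : Finset (ℝ × ℝ)} {j : ℕ} (hj : 1 ≤ j) (hL : ∀ l ∈ L, j + 1 ≤ (R X h l).card) :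
    (L.card : ℝ) ≤ 72 * (X.card : ℝ) ^ 2 / (j : ℝ) ^ 3 + 6 * X.card / j := by
  have jp : (0 : ℝ) < j := by exact_mod_cast hj
  set m : ℝ := (L.card : ℝ) with hm
  set n : ℝ := (X.card : ℝ) with hn
  have m0 : 0 ≤ m := Nat.cast_nonneg _
  have n0 : 0 ≤ n := Nat.cast_nonneg _
  have hE : m * j ≤ ((EL X h L).card : ℝ) := by rw [hm]; exact_mod_cast card_EL hL
  have hC : ((CR h (EL X h L)).card : ℝ) ≤ m ^ 2 := by rw [hm]; exact_mod_cast card_CR X h L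
  have A0 : 0 ≤ 72 * n ^ 2 / (j : ℝ) ^ 3 := by positivity
  have B0 : 0 ≤ 6 * n / j := by positivity
  rcases le_or_gt (m * j) (6 * n) with hc | hc
  · have : m ≤ 6 * n / j := by rw [le_div_iff₀ jp]; exact hc
    linarith
  · have q0 : 0 < m * j := by linarith
    have mp : 0 < m := pos_of_mul_pos_left q0 jp.le
    rcases n0.eq_or_lt with hn0 | np
    · have hX : X = ∅ := by
        rw [hn] at hn0; rw [← card_eq_zero]; exact_mod_cast hn0.symm
      obtain ⟨l, hl⟩ : L.Nonempty := by
        rw [hm] at mp; rw [← card_pos]; exact_mod_cast mp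
      have := hL l hl
      simp [R, hX] at this
    set p : ℝ := 6 * n / (m * j) with hp
    have p0 : 0 < p := by positivity
    have p1 : p ≤ 1 := by rw [hp, div_le_one q0]; exact hc.le
    have hcr := crossing (good_EL X h L) p0.le p1
    have e1 : m * j * p = 6 * n := by rw [hp]; field_simp
    have e2 : m * j * p ^ 2 ≤ 3 * (n * p ^ 1) + m ^ 2 * p ^ 4 := by
      have := mul_le_mul_of_nonneg_right hE (sq_nonneg p)
      have := mul_le_mul_of_nonneg_right hC (by positivity : 0 ≤ p ^ 4)
      linarith
    have e3 : 3 * n ≤ m ^ 2 * p ^ 3 := by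
      have : p * (3 * n) ≤ p * (m ^ 2 * p ^ 3) := by nlinarith
      exact le_of_mul_le_mul_left this p0
    have e4 : 3 * n * (m * (j : ℝ) ^ 3) ≤ 216 * n ^ 3 := by
      have : m ^ 2 * p ^ 3 * (m * (j : ℝ) ^ 3) = 216 * n ^ 3 := by
        calc _ = (m * j * p) ^ 3 := by ring
          _ = _ := by rw [e1]; ring
      rw [← this]
      exact mul_le_mul_of_nonneg_right e3 (by positivity)
    have e5 : m * (j : ℝ) ^ 3 ≤ 72 * n ^ 2 := by
      have : 3 * n * (m * (j : ℝ) ^ 3) ≤ 3 * n * (72 * n ^ 2) := by linarith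
      exact le_of_mul_le_mul_left this (by positivity)
    have : m ≤ 72 * n ^ 2 / (j : ℝ) ^ 3 := by rw [le_div_iff₀ (by positivity)]; exact e5
    linarith

lemma Y_right' (h : ℝ → ℝ) (e : ℝ × ℝ) (he : e.1 ≠ e.2) : Y (LN h e) e.2 = h e.2 := by
  have : e.2 - e.1 ≠ 0 := sub_ne_zero.2 he.symm
  simp only [Y, LN]; field_simp; ring

open Classical in
/-- Lines spanned by the configuration. -/
noncomputable def TL (X : Finset ℝ) (h : ℝ → ℝ) : Finset (ℝ × ℝ) := X.offDiag.image (LN h)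

lemma mem_R {X h l z} : z ∈ R X h l ↔ z ∈ X ∧ h z = Y l z := by simp [R]

lemma pairs (X : Finset ℝ) (h : ℝ → ℝ) :
    X.card * (X.card - 1) ≤ ∑ l ∈ TL X h, (R X h l).card * ((R X h l).card - 1) := by
  classical
  have a : ∀ A : Finset ℝ, A.card * (A.card - 1) = A.offDiag.card := by
    intro A; rw [offDiag_card, Nat.mul_sub, mul_one]
  rw [a, card_eq_sum_card_fiberwise (f := LN h) (t := TL X h)
    (fun e he => mem_image_of_mem _ he)]
  refine sum_le_sum fun l _ => ?_
  rw [a]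
  refine card_le_card fun e he => ?_
  obtain ⟨e1, e2⟩ := mem_filter.1 he
  obtain ⟨e3, e4, e5⟩ := mem_offDiag.1 e1
  subst e2
  exact mem_offDiag.2 ⟨mem_R.2 ⟨e3, (Y_left h e).symm⟩, mem_R.2 ⟨e4, (Y_right' h e e5).symm⟩, e5⟩

lemma pairs2 (X : Finset ℝ) (h : ℝ → ℝ) (M : ℕ) (hM : ∀ l ∈ TL X h, (R X h l).card ≤ M) :
    X.card * (X.card - 1) ≤
      2 * ∑ j ∈ range M, j * ((TL X h).filter (fun l => j < (R X h l).card)).card := by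
  classical
  refine (pairs X h).trans (le_of_eq ?_)
  have : ∀ l ∈ TL X h, (R X h l).card * ((R X h l).card - 1) =
      2 * ∑ j ∈ range M, if j < (R X h l).card then j else 0 := by
    intro l hl
    rw [← sum_filter, ← Finset.sum_range_id_mul_two, mul_comm]
    congr 2
    ext j
    have := hM l hl
    simp only [mem_range, mem_filter]
    omega
  rw [sum_congr rfl this, ← mul_sum, sum_comm]
  congr 1
  refine sum_congr rfl fun j _ => ?_
  rw [← sum_filter, sum_const, smul_eq_mul, mul_comm]

lemma beck_arith (n t M : ℕ) (m : ℕ → ℕ)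
    (hp : n * (n - 1) ≤ 2 * ∑ j ∈ range M, j * m j) (hmt : ∀ j, m j ≤ t)
    (hr : ∀ j : ℕ, 1 ≤ j → (j : ℝ) * m j ≤ 72 * (n : ℝ) ^ 2 * ((j : ℝ) ^ 2)⁻¹ + 6 * n) :
    (n : ℝ) * (n - 1) ≤ 2 * (2304 ^ 2 * t + (n : ℝ) ^ 2 / 16 + 6 * n * M) := by
  have h1 : (n : ℝ) * (n - 1) ≤ 2 * ∑ j ∈ range M, (j : ℝ) * m j := by
    rcases Nat.eq_zero_or_pos n with h0 | h0
    · rw [h0]; simp only [Nat.cast_zero, zero_mul]; positivity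
    · have : ((n - 1 : ℕ) : ℝ) = n - 1 := Nat.cast_pred h0
      rw [← this]
      have hp' := (Nat.cast_le (α := ℝ)).2 hp
      simp only [Nat.cast_mul, Nat.cast_sum, Nat.cast_ofNat] at hp'
      exact hp'
  have h2 : ∑ j ∈ range M, (j : ℝ) * m j ≤
      ∑ j ∈ range 2304, (j : ℝ) * m j + ∑ j ∈ Ioo 2303 M, (j : ℝ) * m j := by
    rw [← sum_union]
    · refine sum_le_sum_of_subset_of_nonneg ?_ (fun _ _ _ => by positivity)
      intro j hj
      simp only [mem_union, mem_range, mem_Ioo] at *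
      omega
    · rw [disjoint_left]; intro j hj
      simp only [mem_range, mem_Ioo] at *
      omega
  have h3 : ∑ j ∈ range 2304, (j : ℝ) * m j ≤ 2304 ^ 2 * t := by
    calc _ ≤ ∑ j ∈ range 2304, (2304 : ℝ) * t := by
          refine sum_le_sum fun j hj => ?_
          have a : (j : ℝ) ≤ 2304 := by exact_mod_cast (mem_range.1 hj).le
          have b : (m j : ℝ) ≤ t := by exact_mod_cast hmt j
          exact mul_le_mul a b (by positivity) (by positivity)
      _ = _ := by rw [sum_const, card_range, nsmul_eq_mul]; push_cast; ring
  have h4 : ∑ j ∈ Ioo 2303 M, (j : ℝ) * m j ≤ (n : ℝ) ^ 2 / 16 + 6 * n * M := by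
    calc _ ≤ ∑ j ∈ Ioo 2303 M, (72 * (n : ℝ) ^ 2 * ((j : ℝ) ^ 2)⁻¹ + 6 * n) := by
          refine sum_le_sum fun j hj => hr j ?_
          have := (mem_Ioo.1 hj).1
          omega
      _ = 72 * (n : ℝ) ^ 2 * ∑ j ∈ Ioo 2303 M, ((j : ℝ) ^ 2)⁻¹ + (M - 2303 - 1 : ℕ) * (6 * n) := by
          rw [sum_add_distrib, ← mul_sum, sum_const, Nat.card_Ioo, nsmul_eq_mul]
      _ ≤ 72 * (n : ℝ) ^ 2 * (2 / 2304) + M * (6 * n) := by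
          have a := sum_Ioo_inv_sq_le (α := ℝ) 2303 M
          have b : ((M - 2303 - 1 : ℕ) : ℝ) ≤ M := by
            exact_mod_cast (by omega : M - 2303 - 1 ≤ M)
          norm_num at a
          gcongr
          norm_num
          exact a
      _ = _ := by ring
  linarith

lemma beck (X : Finset ℝ) (h : ℝ → ℝ) (M : ℕ) (hM : ∀ l ∈ TL X h, (R X h l).card ≤ M) :
    (X.card : ℝ) * (X.card - 1) ≤
      2 * (2304 ^ 2 * (TL X h).card + (X.card : ℝ) ^ 2 / 16 + 6 * X.card * M) := by
  classical
  refine beck_arith _ _ M _ (pairs2 X h M hM) (fun j => card_le_card (filter_subset _ _)) ?_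
  intro j hj
  have jp : (0 : ℝ) < j := by exact_mod_cast hj
  have := rich (X := X) (h := h) (L := (TL X h).filter (fun l => j < (R X h l).card)) hj
    (fun l hl => (mem_filter.1 hl).2)
  refine (mul_le_mul_of_nonneg_left this jp.le).trans (le_of_eq ?_)
  field_simp

/-- A line with `M` points and `z` points off it. -/
lemma two_lines {X : Finset ℝ} {h : ℝ → ℝ} {l : ℝ × ℝ} {Q : Finset ℝ} (hQ : Q ⊆ X \ R X h l) :
    Q.card * ((R X h l).card - Q.card) ≤ (TL X h).card := by
  classical
  set A := R X h l with hA
  have QX : ∀ q ∈ Q, q ∈ X := fun q hq => (mem_sdiff.1 (hQ hq)).1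
  have Ql : ∀ q ∈ Q, h q ≠ Y l q := fun q hq hc =>
    (mem_sdiff.1 (hQ hq)).2 (mem_R.2 ⟨QX q hq, hc⟩)
  have ne : ∀ p ∈ A, ∀ q ∈ Q, p ≠ q := by
    rintro p hp q hq rfl
    exact Ql _ hq (mem_R.1 hp).2
  have uniq : ∀ p ∈ A, ∀ p' ∈ A, ∀ q ∈ Q, ∀ q' ∈ Q, LN h (p, q) = LN h (p', q') → p = p' := by
    intro p hp p' hp' q hq q' hq' hl
    by_contra hc
    have a := Y_left h (p, q)
    have b := Y_left h (p', q')
    rw [← hl] at b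
    simp only at a b
    have : LN h (p, q) = l :=
      eq_of_Y hc (a.trans (mem_R.1 hp).2) (b.trans (mem_R.1 hp').2)
    have c := Y_right' h (p, q) (ne p hp q hq)
    rw [this] at c
    exact Ql q hq c.symm
  set G := (A ×ˢ Q).filter (fun e => ∀ q ∈ Q, q ≠ e.2 → h q ≠ Y (LN h e) q) with hG
  have hGT : G.card ≤ (TL X h).card := by
    refine card_le_card_of_injOn (LN h) ?_ ?_
    · intro e he
      obtain ⟨e1, e2⟩ := mem_product.1 (mem_filter.1 he).1
      exact mem_image_of_mem _ (mem_offDiag.2 ⟨(mem_R.1 e1).1, QX _ e2, ne _ e1 _ e2⟩)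
    · intro e he f hf hef
      obtain ⟨e0, e3⟩ := mem_filter.1 he
      obtain ⟨e1, e2⟩ := mem_product.1 e0
      obtain ⟨f0, f3⟩ := mem_filter.1 hf
      obtain ⟨f1, f2⟩ := mem_product.1 f0
      refine Prod.ext (uniq _ e1 _ f1 _ e2 _ f2 hef) ?_
      by_contra hc
      refine e3 f.2 f2 (Ne.symm hc) ?_
      rw [hef, Y_right' h f (ne _ f1 _ f2)]
  refine le_trans ?_ hGT
  rw [card_eq_sum_card_fiberwise (s := G) (f := Prod.snd) (t := Q)
    (fun e he => (mem_product.1 (mem_filter.1 he).1).2), ← smul_eq_mul, ← sum_const]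
  refine sum_le_sum fun q hq => ?_
  set P := A.filter (fun p => ∀ q' ∈ Q, q' ≠ q → h q' ≠ Y (LN h (p, q)) q') with hP
  have c1 : P.card ≤ (G.filter (fun e => e.2 = q)).card := by
    refine card_le_card_of_injOn (fun p => (p, q)) ?_ (fun a _ b _ hab => (Prod.mk.inj hab).1)
    intro p hp
    obtain ⟨p1, p2⟩ := mem_filter.1 hp
    exact mem_filter.2 ⟨mem_filter.2 ⟨mem_product.2 ⟨p1, hq⟩, p2⟩, rfl⟩
  have c2 : (A \ P).card ≤ Q.card := by
    have : ∀ p ∈ A \ P, ∃ q' ∈ Q, q' ≠ q ∧ h q' = Y (LN h (p, q)) q' := by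
      intro p hp
      obtain ⟨p1, p2⟩ := mem_sdiff.1 hp
      by_contra hc
      push Not at hc
      exact p2 (mem_filter.2 ⟨p1, hc⟩)
    choose! s s1 s2 s3 using this
    refine card_le_card_of_injOn s s1 ?_
    intro p hp p' hp' hs
    have p1 := (mem_sdiff.1 hp).1
    have p1' := (mem_sdiff.1 hp').1
    refine uniq p p1 p' p1' q hq q hq (eq_of_Y (s2 p hp) ?_ ?_)
    · rw [← s3 p hp, hs, ← s3 p' hp']
    · rw [Y_right' h (p, q) (ne p p1 q hq), Y_right' h (p', q) (ne p' p1' q hq)]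
  have c3 : A.card ≤ (A \ P).card + P.card := card_le_card_sdiff_add_card
  omega

lemma model (X : Finset ℝ) (h : ℝ → ℝ) (x : ℕ)
    (hx : ∀ l, (R X h l).card ≤ X.card - x) :
    (1 / (8 * 2304 ^ 2) : ℝ) * x * X.card ≤ (TL X h).card := by
  classical
  set n := X.card with hn
  rcases Nat.eq_zero_or_pos x with h0 | x0
  · rw [h0]; simp
  rcases Nat.eq_zero_or_pos n with h0 | n0
  · rw [h0]; simp
  rcases Nat.lt_or_ge n 2 with h1 | n2
  · obtain ⟨u, hu⟩ := card_pos.1 n0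
    have := hx (0, h u)
    have hm : u ∈ R X h (0, h u) := mem_R.2 ⟨hu, by simp [Y]⟩
    have := card_pos.2 ⟨u, hm⟩
    omega
  have hT : (TL X h).Nonempty := by
    obtain ⟨u, hu, v, hv, huv⟩ := one_lt_card.1 (by omega : 1 < X.card)
    exact ⟨_, mem_image_of_mem _ (mem_offDiag.2 ⟨hu, hv, huv⟩ : (u, v) ∈ X.offDiag)⟩
  obtain ⟨l, hl, hmax⟩ := (TL X h).exists_max_image (fun l => (R X h l).card) hT
  set M := (R X h l).card with hM
  have M2 : 2 ≤ M := by
    obtain ⟨e, he, rfl⟩ := mem_image.1 hl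
    obtain ⟨e3, e4, e5⟩ := mem_offDiag.1 he
    exact one_lt_card.2 ⟨e.1, mem_R.2 ⟨e3, (Y_left h e).symm⟩, e.2,
      mem_R.2 ⟨e4, (Y_right' h e e5).symm⟩, e5⟩
  have hMx : M ≤ n - x := hx l
  have hxn : x + M ≤ n := by omega
  have hoff : (X \ R X h l).card = n - M := by
    rw [card_sdiff_of_subset (show R X h l ⊆ X from filter_subset _ _)]
  have rx : (x : ℝ) + M ≤ n := by exact_mod_cast hxn
  have rn : (2 : ℝ) ≤ n := by exact_mod_cast n2
  have rM : (2 : ℝ) ≤ M := by exact_mod_cast M2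
  have rx0 : (0 : ℝ) ≤ x := Nat.cast_nonneg _
  set t : ℝ := ((TL X h).card : ℝ) with ht
  rcases le_or_gt (96 * (M : ℝ)) n with c | c
  · have b := beck X h M hmax
    rw [← hn, ← ht] at b
    have b1 : (x : ℝ) * n ≤ n * n := mul_le_mul_of_nonneg_right (by linarith) (by linarith)
    have b2 : (n : ℝ) * (96 * M) ≤ n * n := mul_le_mul_of_nonneg_left c (by linarith)
    have b3 : (2 : ℝ) * n ≤ n * n := mul_le_mul_of_nonneg_right rn (by linarith)
    nlinarith
  · have gen : ∀ z : ℕ, z ≤ x → z ≤ M → (z : ℝ) * (M - z) ≤ t := by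
      intro z hz hzM
      obtain ⟨Q, hQ, hQc⟩ := exists_subset_card_eq (s := X \ R X h l) (n := z) (by omega)
      have := two_lines hQ
      rw [hQc, ← hM] at this
      have e : ((M - z : ℕ) : ℝ) = M - z := Nat.cast_sub hzM
      rw [← e, ht]
      exact_mod_cast this
    rcases le_or_gt (2 * x) M with d | d
    · have g := gen x le_rfl (by omega)
      have d' : 2 * (x : ℝ) ≤ M := by exact_mod_cast d
      have : (x : ℝ) * n ≤ x * (96 * M) := mul_le_mul_of_nonneg_left c.le rx0
      have : (x : ℝ) * (2 * x) ≤ x * M := mul_le_mul_of_nonneg_left d' rx0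
      nlinarith
    · have g := gen (M / 2) (by omega) (by omega)
      have k1 : (M : ℝ) ≤ 3 * (M / 2 : ℕ) := by exact_mod_cast (by omega : M ≤ 3 * (M / 2))
      have k2 : 2 * ((M / 2 : ℕ) : ℝ) ≤ M := by exact_mod_cast (by omega : 2 * (M / 2) ≤ M)
      have g2 : (M : ℝ) * M ≤ 6 * t := by nlinarith
      have b1 : (x : ℝ) * n ≤ n * n := mul_le_mul_of_nonneg_right (by linarith) (by linarith)
      have b2 : (n : ℝ) * n ≤ (96 * M) * (96 * M) := by nlinarith
      nlinarith

/-- The line of `ℝ²` with equation `p 1 = Y l (p 0 + s * p 1)`. -/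
noncomputable def lineOf (s : ℝ) (l : ℝ × ℝ) : AffineSubspace ℝ (Fin 2 → ℝ) :=
  AffineSubspace.mk' ![-(s * l.2), l.2] (Submodule.span ℝ {![1 - s * l.1, l.1]})

lemma mem_lineOf {s l} {p : Fin 2 → ℝ} : p ∈ lineOf s l ↔ p 1 = Y l (p 0 + s * p 1) := by
  rw [lineOf, AffineSubspace.mem_mk', Submodule.mem_span_singleton]
  constructor
  · rintro ⟨a, ha⟩
    have h0 := congrFun ha 0
    have h1 := congrFun ha 1
    simp at h0 h1
    have : a = p 0 + s * p 1 := by linear_combination h0 + s * h1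
    rw [Y, ← this]; linarith
  · intro hp
    refine ⟨p 0 + s * p 1, ?_⟩
    rw [Y] at hp
    ext i
    fin_cases i
    · simp; linear_combination s * hp
    · simp; linarith

lemma finrank_lineOf (s l) : Module.finrank ℝ (lineOf s l).direction = 1 := by
  rw [lineOf, AffineSubspace.direction_mk']
  apply finrank_span_singleton
  intro hc
  have h0 := congrFun hc 0
  have h1 := congrFun hc 1
  simp at h0 h1
  rw [h1] at h0; simp at h0

lemma lineOf_inj (s) : Function.Injective (lineOf s) := by
  intro l m hlm
  have key : ∀ a : ℝ, Y l a = Y m a := by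
    intro a
    have h1 : ![a - s * Y l a, Y l a] ∈ lineOf s l := by rw [mem_lineOf]; simp
    rw [hlm, mem_lineOf] at h1
    simpa using h1
  exact eq_of_Y zero_ne_one (key 0) (key 1)

lemma spanned_finite (S : Finset (Fin 2 → ℝ)) :
    {l : AffineSubspace ℝ (Fin 2 → ℝ) |
          Module.finrank ℝ l.direction = 1 ∧
          ∃ p₁ ∈ S, ∃ p₂ ∈ S, p₁ ≠ p₂ ∧ p₁ ∈ l ∧ p₂ ∈ l}.Finite := by
  classical
  refine ((S ×ˢ S).image (fun e => line[ℝ, e.1, e.2])).finite_toSet.subset ?_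
  rintro l ⟨hl, p, hp, q, hq, hpq, hpl, hql⟩
  refine mem_coe.2 (mem_image.2 ⟨(p, q), mem_product.2 ⟨hp, hq⟩, ?_⟩)
  have hle : line[ℝ, p, q] ≤ l := affineSpan_pair_le_of_mem_of_mem hpl hql
  refine AffineSubspace.eq_of_direction_eq_of_nonempty_of_le ?_ ⟨p, left_mem_affineSpan_pair ℝ p q⟩ hle
  apply Submodule.eq_of_le_of_finrank_eq (AffineSubspace.direction_le hle)
  rw [hl, direction_affineSpan, vectorSpan_pair_rev]
  exact finrank_span_singleton (vsub_ne_zero.2 hpq.symm)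

lemma exists_shear (S : Finset (Fin 2 → ℝ)) :
    ∃ s : ℝ, Set.InjOn (fun p : Fin 2 → ℝ => p 0 + s * p 1) S := by
  classical
  obtain ⟨s, hs⟩ := Infinite.exists_notMem_finset
    ((S ×ˢ S).image (fun e => -(e.1 0 - e.2 0) / (e.1 1 - e.2 1)))
  refine ⟨s, fun p hp q hq hpq => ?_⟩
  simp only at hpq
  by_cases h1 : p 1 = q 1
  · ext i
    fin_cases i
    · simp; rw [h1] at hpq; linarith
    · exact h1
  · exfalso
    refine hs (mem_image.2 ⟨(p, q), mem_product.2 ⟨hp, hq⟩, ?_⟩)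
    have : p 1 - q 1 ≠ 0 := sub_ne_zero.2 h1
    simp only
    field_simp
    linarith

end EB

/-- Erdős–Beck theorem: there is an absolute constant `c > 0` such that any
set `S` of `n` points in the plane with at most `n − x` collinear spans at least `c·x·n`
lines. -/
theorem erdos_beck : ∃ c : ℝ, 0 < c ∧
    ∀ (n x : ℕ) (S : Finset (Fin 2 → ℝ)), S.card = n →
      (∀ l : AffineSubspace ℝ (Fin 2 → ℝ), Module.finrank ℝ l.direction = 1 →
        ((↑S : Set (Fin 2 → ℝ)) ∩ ↑l).ncard ≤ n - x) →
      ({l : AffineSubspace ℝ (Fin 2 → ℝ) |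
          Module.finrank ℝ l.direction = 1 ∧
          ∃ p₁ ∈ S, ∃ p₂ ∈ S, p₁ ≠ p₂ ∧ p₁ ∈ l ∧ p₂ ∈ l}.ncard : ℝ) ≥ c * x * n := by
  classical
  refine ⟨1 / (8 * 2304 ^ 2), by norm_num, ?_⟩
  intro n x S hn hS
  obtain ⟨s, hs⟩ := EB.exists_shear S
  set φ : (Fin 2 → ℝ) → ℝ := fun p => p 0 + s * p 1 with hφ
  set X := S.image φ with hX
  have hXn : X.card = n := by rw [hX, Finset.card_image_of_injOn hs, hn]
  set h : ℝ → ℝ := fun z => Function.invFunOn φ (S : Set (Fin 2 → ℝ)) z 1 with hh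
  have hhp : ∀ p ∈ S, h (φ p) = p 1 := by
    intro p hp
    have : Function.invFunOn φ (S : Set (Fin 2 → ℝ)) (φ p) = p := hs.leftInvOn_invFunOn hp
    simp only [hh, this]
  have hR : ∀ l, (EB.R X h l).card ≤ X.card - x := by
    intro l
    have h1 := hS (EB.lineOf s l) (EB.finrank_lineOf s l)
    rw [hXn]
    refine le_trans ?_ h1
    have hfin : ((S : Set (Fin 2 → ℝ)) ∩ ↑(EB.lineOf s l)).Finite :=
      S.finite_toSet.subset Set.inter_subset_left
    rw [← Set.ncard_coe_finset]
    refine le_trans (Set.ncard_le_ncard (t := φ '' ((S : Set (Fin 2 → ℝ)) ∩ ↑(EB.lineOf s l)))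
      ?_ (hfin.image φ)) (Set.ncard_image_le hfin)
    intro z hz
    obtain ⟨z1, z2⟩ := EB.mem_R.1 (Finset.mem_coe.1 hz)
    obtain ⟨p, hp, rfl⟩ := Finset.mem_image.1 z1
    rw [hhp p hp] at z2
    exact ⟨p, ⟨hp, EB.mem_lineOf.2 z2⟩, rfl⟩
  have hmod := EB.model X h x hR
  rw [hXn] at hmod
  refine le_trans hmod ?_
  have hc : (EB.TL X h).card = ((EB.TL X h).image (EB.lineOf s)).card :=
    (Finset.card_image_of_injective _ (EB.lineOf_inj s)).symm
  rw [hc, ← Set.ncard_coe_finset]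
  refine Nat.cast_le.2 (Set.ncard_le_ncard ?_ (EB.spanned_finite S))
  intro m hm
  obtain ⟨l, hl, rfl⟩ := Finset.mem_image.1 (Finset.mem_coe.1 hm)
  obtain ⟨⟨u, v⟩, he, rfl⟩ := Finset.mem_image.1 hl
  obtain ⟨hu, hv, huv⟩ := Finset.mem_offDiag.1 he
  obtain ⟨p, hp, rfl⟩ := Finset.mem_image.1 hu
  obtain ⟨q, hq, rfl⟩ := Finset.mem_image.1 hv
  refine ⟨EB.finrank_lineOf s _, p, hp, q, hq, fun hpq => huv (by simp only [hpq]), ?_, ?_⟩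
  · rw [EB.mem_lineOf]
    exact (hhp p hp).symm.trans (EB.Y_left h (φ p, φ q)).symm
  · rw [EB.mem_lineOf]
    exact (hhp q hq).symm.trans (EB.Y_right' h (φ p, φ q) huv).symm
end

section
/- For each β ∈ (0,1) there exists γ > 0 such that for any set S of n points in the plane, either some line contains at least βn points of S, or the number of lines spanned by S exceeds γn². -/
open Classical in
/-- Lines spanned by a finite set. -/
noncomputable def spLines (S : Finset (Fin 2 → ℝ)) : Finset (AffineSubspace ℝ (Fin 2 → ℝ)) :=
  S.offDiag.image (fun z => affineSpan ℝ {z.1, z.2})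

lemma line_finrank {p q : Fin 2 → ℝ} (h : p ≠ q) :
    Module.finrank ℝ (affineSpan ℝ {p, q}).direction = 1 := by
  rw [direction_affineSpan, vectorSpan_pair]
  apply finrank_span_singleton
  simpa [sub_eq_zero] using h

lemma line_unique {l : AffineSubspace ℝ (Fin 2 → ℝ)} (hl : Module.finrank ℝ l.direction = 1)
    {p q : Fin 2 → ℝ} (h : p ≠ q) (hp : p ∈ l) (hq : q ∈ l) : affineSpan ℝ {p, q} = l := by
  have hle : affineSpan ℝ {p, q} ≤ l := by
    rw [affineSpan_le]
    intro x hx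
    rcases hx with rfl | hx
    · exact hp
    · rw [Set.mem_singleton_iff] at hx
      rw [hx]; exact hq
  refine AffineSubspace.eq_of_direction_eq_of_nonempty_of_le ?_ ⟨p, left_mem_affineSpan_pair ℝ p q⟩ hle
  apply Submodule.eq_of_le_of_finrank_eq (AffineSubspace.direction_le hle)
  rw [line_finrank h, hl]

lemma mem_spLines {S : Finset (Fin 2 → ℝ)} {l : AffineSubspace ℝ (Fin 2 → ℝ)} :
    l ∈ spLines S ↔ Module.finrank ℝ l.direction = 1 ∧
            ∃ p₁ ∈ S, ∃ p₂ ∈ S, p₁ ≠ p₂ ∧ p₁ ∈ l ∧ p₂ ∈ l := by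
  simp only [spLines, Finset.mem_image, Finset.mem_offDiag, Prod.exists]
  constructor
  · rintro ⟨p, q, ⟨hp, hq, h⟩, rfl⟩
    exact ⟨line_finrank h, p, hp, q, hq, h, left_mem_affineSpan_pair ℝ p q,
      right_mem_affineSpan_pair ℝ p q⟩
  · rintro ⟨hl, p, hp, q, hq, h, h1, h2⟩
    exact ⟨p, q, ⟨hp, hq, h⟩, line_unique hl h h1 h2⟩

open Classical in
lemma pair_count {S Q : Finset (Fin 2 → ℝ)} (hQ : Q ⊆ S) :
    ∑ l ∈ spLines S, (((Q.filter (· ∈ l)).card : ℝ) * ((Q.filter (· ∈ l)).card - 1))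
      = (Q.card : ℝ) * (Q.card - 1) := by
  have off : ∀ A : Finset (Fin 2 → ℝ), (A.card : ℝ) * (A.card - 1) = (A.offDiag.card : ℝ) := by
    intro A
    rw [Finset.offDiag_card, Nat.cast_sub (Nat.le_mul_self _)]
    push_cast; ring
  simp only [off]
  have hm : ∀ z ∈ Q.offDiag, affineSpan ℝ {z.1, z.2} ∈ spLines S := by
    intro z hz
    exact Finset.mem_image_of_mem (fun z : (Fin 2 → ℝ) × (Fin 2 → ℝ) => affineSpan ℝ {z.1, z.2})
      (Finset.offDiag_mono hQ hz)
  rw [Finset.card_eq_sum_card_fiberwise hm]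
  push_cast
  apply Finset.sum_congr rfl
  intro l hl
  congr 2
  ext ⟨p, q⟩
  simp only [Finset.mem_offDiag, Finset.mem_filter]
  constructor
  · rintro ⟨⟨hp, hpl⟩, ⟨hq, hql⟩, h⟩
    exact ⟨⟨hp, hq, h⟩, line_unique (mem_spLines.1 hl).1 h hpl hql⟩
  · rintro ⟨⟨hp, hq, h⟩, rfl⟩
    exact ⟨⟨hp, left_mem_affineSpan_pair ℝ p q⟩, ⟨hq, right_mem_affineSpan_pair ℝ p q⟩, h⟩

open Classical in
/-- Many points on a line and many points off it. -/
lemma case_one (S : Finset (Fin 2 → ℝ)) (l₀ : AffineSubspace ℝ (Fin 2 → ℝ))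
    (hl₀ : Module.finrank ℝ l₀.direction = 1) (m k : ℝ)
    (hk : k = (S.filter (· ∈ l₀)).card) (hm : m = (S.filter (· ∉ l₀)).card) (hm0 : 0 < m) :
    m * k ^ 2 ≤ (spLines S).card * (m + k) := by
  set A := S.filter (· ∈ l₀) with hA
  set B := S.filter (· ∉ l₀) with hB
  have hmaps : ∀ z ∈ B ×ˢ A, affineSpan ℝ {z.1, z.2} ∈ spLines S := by
    rintro ⟨p, q⟩ hz
    simp only [Finset.mem_product, hA, hB, Finset.mem_filter] at hz
    refine Finset.mem_image_of_mem (fun z : (Fin 2 → ℝ) × (Fin 2 → ℝ) => affineSpan ℝ {z.1, z.2})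
      (a := (p, q)) ?_
    simp only [Finset.mem_offDiag]
    refine ⟨hz.1.1, hz.2.1, ?_⟩
    rintro rfl
    exact hz.1.2 hz.2.2
  set r : AffineSubspace ℝ (Fin 2 → ℝ) → ℕ :=
    fun l => ((B ×ˢ A).filter (fun z => affineSpan ℝ {z.1, z.2} = l)).card with hr
  have h1 : m * k = ∑ l ∈ spLines S, (r l : ℝ) := by
    have := Finset.card_eq_sum_card_fiberwise hmaps
    rw [Finset.card_product] at this
    rw [hm, hk]
    exact_mod_cast this
  have hrb : ∀ l ∈ spLines S, r l ≤ (B.filter (· ∈ l)).card := by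
    intro l hl
    apply Finset.card_le_card_of_injOn Prod.fst
    · rintro ⟨p, q⟩ hz
      simp only [Finset.coe_filter, Finset.mem_product, Set.mem_ofPred_eq] at hz ⊢
      exact ⟨hz.1.1, hz.2 ▸ left_mem_affineSpan_pair ℝ p q⟩
    · rintro ⟨p, q⟩ hz ⟨p', q'⟩ hz' heq
      simp only [Finset.coe_filter, Finset.mem_product, Set.mem_ofPred_eq] at hz hz' heq
      subst heq
      by_contra hne
      have hq : q ≠ q' := fun h => hne (by rw [h])
      have hql : q ∈ l := hz.2 ▸ right_mem_affineSpan_pair ℝ p q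
      have hql' : q' ∈ l := hz'.2 ▸ right_mem_affineSpan_pair ℝ p q'
      have hpl : p ∈ l := hz.2 ▸ left_mem_affineSpan_pair ℝ p q
      have e1 := line_unique (mem_spLines.1 hl).1 hq hql hql'
      have e2 := line_unique hl₀ hq (Finset.mem_filter.1 hz.1.2).2 (Finset.mem_filter.1 hz'.1.2).2
      have := (Finset.mem_filter.1 hz.1.1).2
      rw [← e2, e1] at this
      exact this hpl
  have h2 : ∑ l ∈ spLines S, (r l : ℝ) ^ 2 ≤ m * k + m * (m - 1) := by
    rw [h1, hm, ← pair_count (S := S) (Q := B) (Finset.filter_subset _ _), ← Finset.sum_add_distrib]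
    apply Finset.sum_le_sum
    intro l hl
    have hb := hrb l hl
    set b := (B.filter (· ∈ l)).card
    rcases Nat.eq_zero_or_pos (r l) with h0 | h0
    · rw [h0]
      rcases Nat.eq_zero_or_pos b with h3 | h3
      · simp [h3]
      · have : (1 : ℝ) ≤ b := by exact_mod_cast h3
        push_cast
        nlinarith
    · have h3 : (1 : ℝ) ≤ r l := by exact_mod_cast h0
      have h4 : (r l : ℝ) ≤ b := by exact_mod_cast hb
      nlinarith
  have h3 := sq_sum_le_card_mul_sum_sq (s := spLines S) (f := fun l => (r l : ℝ))
  rw [← h1] at h3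
  have h4 : (m * k) ^ 2 ≤ (spLines S).card * (m * k + m * (m - 1)) :=
    h3.trans (mul_le_mul_of_nonneg_left h2 (Nat.cast_nonneg _))
  have h5 : m * (m * k ^ 2) ≤ m * ((spLines S).card * (m + k)) := by
    have : (0 : ℝ) ≤ (spLines S).card * m := by positivity
    nlinarith
  exact le_of_mul_le_mul_left h5 hm0

/-- A continuous choice of medians. -/
lemma exists_median {ι : Type*} (A : Finset ι) (hA : A.Nonempty) (F : ℝ → ι → ℝ)
    (hF : ∀ i, Continuous (fun t => F t i)) :
    ∃ μ : ℝ → ℝ, Continuous μ ∧ ∀ t,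
      2 * (A.filter (fun i => F t i < μ t)).card ≤ A.card ∧
      2 * (A.filter (fun i => μ t < F t i)).card ≤ A.card ∧
      (∃ i ∈ A, F t i ≤ μ t) ∧ (∃ i ∈ A, μ t ≤ F t i) := by
  classical
  have hc : 0 < A.card := hA.card_pos
  set r := (A.card + 1) / 2 with hr
  have hr0 : 0 < r := by omega
  have hrA : r ≤ A.card := by omega
  have hne : (A.powersetCard r).attach.Nonempty := by
    rw [Finset.attach_nonempty_iff]
    exact Finset.powersetCard_nonempty.2 hrA
  have hT : ∀ T : A.powersetCard r, T.1.Nonempty := by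
    intro T
    have := (Finset.mem_powersetCard.1 T.2).2
    exact Finset.card_pos.1 (by omega)
  refine ⟨fun t => (A.powersetCard r).attach.inf' hne (fun T => T.1.sup' (hT T) (fun i => F t i)),
    ?_, ?_⟩
  · apply Continuous.finset_inf'_apply
    intro T _
    apply Continuous.finset_sup'_apply
    intro i _
    exact hF i
  · intro t
    beta_reduce
    set v := (A.powersetCard r).attach.inf' hne (fun T => T.1.sup' (hT T) (fun i => F t i)) with hv
    have hlow : ∀ T, T ⊆ A → T.card = r → ∃ i ∈ T, v ≤ F t i := by
      intro T hTA hTr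
      have hmem : T ∈ A.powersetCard r := Finset.mem_powersetCard.2 ⟨hTA, hTr⟩
      have h1 : v ≤ T.sup' (hT ⟨T, hmem⟩) (fun i => F t i) :=
        Finset.inf'_le (fun T : A.powersetCard r => T.1.sup' (hT T) (fun i => F t i))
          (Finset.mem_attach _ ⟨T, hmem⟩)
      obtain ⟨i, hi, he⟩ := Finset.exists_mem_eq_sup' (hT ⟨T, hmem⟩) (fun i => F t i)
      exact ⟨i, hi, by rw [← he]; exact h1⟩
    obtain ⟨T₀, -, hT₀⟩ := Finset.exists_mem_eq_inf' hne
      (fun T : A.powersetCard r => T.1.sup' (hT T) (fun i => F t i))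
    rw [← hv] at hT₀
    obtain ⟨hT₀A, hT₀r⟩ := Finset.mem_powersetCard.1 T₀.2
    have hup : ∀ i ∈ T₀.1, F t i ≤ v := by
      intro i hi
      rw [hT₀]
      exact Finset.le_sup' (fun i => F t i) hi
    refine ⟨?_, ?_, ?_, ?_⟩
    · by_contra hcon
      have : r ≤ (A.filter (fun i => F t i < v)).card := by omega
      obtain ⟨T, hTs, hTr⟩ := Finset.exists_subset_card_eq this
      obtain ⟨i, hi, hiv⟩ := hlow T (hTs.trans (Finset.filter_subset _ _)) hTr
      have := (Finset.mem_filter.1 (hTs hi)).2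
      linarith
    · have hsub : A.filter (fun i => v < F t i) ⊆ A \ T₀.1 := by
        intro i hi
        rw [Finset.mem_filter] at hi
        rw [Finset.mem_sdiff]
        exact ⟨hi.1, fun h => by linarith [hup i h, hi.2]⟩
      have h1 := Finset.card_le_card hsub
      rw [Finset.card_sdiff_of_subset hT₀A, hT₀r] at h1
      omega
    · obtain ⟨i, hi⟩ := hT T₀
      exact ⟨i, hT₀A hi, hup i hi⟩
    · obtain ⟨T, hTA, hTr⟩ := Finset.exists_subset_card_eq hrA
      obtain ⟨i, hi, h⟩ := hlow T hTA hTr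
      exact ⟨i, hTA hi, h⟩

/-- Planar ham sandwich for sets separated by a vertical line. -/
lemma ham_sandwich (A B : Finset (Fin 2 → ℝ)) (hA : A.Nonempty) (hB : B.Nonempty) (a : ℝ)
    (hAa : ∀ p ∈ A, p 0 < a) (hBa : ∀ p ∈ B, a < p 0) :
    ∃ m b : ℝ,
      2 * (A.filter (fun p => p 1 - m * p 0 < b)).card ≤ A.card ∧
      2 * (A.filter (fun p => b < p 1 - m * p 0)).card ≤ A.card ∧
      2 * (B.filter (fun p => p 1 - m * p 0 < b)).card ≤ B.card ∧
      2 * (B.filter (fun p => b < p 1 - m * p 0)).card ≤ B.card := by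
  have hF : ∀ p : Fin 2 → ℝ, Continuous (fun t : ℝ => p 1 - t * p 0) := by
    intro p; fun_prop
  obtain ⟨μ, hμ, hμA⟩ := exists_median A hA (fun t p => p 1 - t * p 0) hF
  obtain ⟨ν, hν, hνB⟩ := exists_median B hB (fun t p => p 1 - t * p 0) hF
  -- a uniform slope bound
  obtain ⟨M, hM⟩ : ∃ M : ℝ, ∀ z ∈ A ×ˢ B, |(z.2 1 - z.1 1) / (z.2 0 - z.1 0)| ≤ M := by
    obtain ⟨M, hM⟩ := ((A ×ˢ B).image
      (fun z => |(z.2 1 - z.1 1) / (z.2 0 - z.1 0)|)).bddAbove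
    exact ⟨M, fun z hz => hM (Finset.mem_coe.2 (Finset.mem_image_of_mem _ hz))⟩
  have key : ∀ p ∈ A, ∀ q ∈ B, -M * (q 0 - p 0) ≤ q 1 - p 1 ∧ q 1 - p 1 ≤ M * (q 0 - p 0) := by
    intro p hp q hq
    have h := hM (p, q) (Finset.mk_mem_product hp hq)
    have hpos : 0 < q 0 - p 0 := by linarith [hAa p hp, hBa q hq]
    rw [abs_le] at h
    simp only at h
    rw [le_div_iff₀ hpos, div_le_iff₀ hpos] at h
    exact h
  have hlo : μ (-M) - ν (-M) ≤ 0 := by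
    obtain ⟨-, -, -, p, hp, h1⟩ := hμA (-M)
    obtain ⟨-, -, ⟨q, hq, h2⟩, -⟩ := hνB (-M)
    have := key p hp q hq
    linarith
  have hhi : 0 ≤ μ M - ν M := by
    obtain ⟨-, -, ⟨p, hp, h1⟩, -⟩ := hμA M
    obtain ⟨-, -, -, q, hq, h2⟩ := hνB M
    have := key p hp q hq
    linarith
  obtain ⟨t, ht⟩ := mem_range_of_exists_le_of_exists_ge (hμ.sub hν) ⟨-M, hlo⟩ ⟨M, hhi⟩
  have ht' : μ t = ν t := by simpa [sub_eq_zero] using ht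
  refine ⟨t, μ t, (hμA t).1, (hμA t).2.1, ?_, ?_⟩
  · rw [ht']; exact (hνB t).1
  · rw [ht']; exact (hνB t).2.1

/-- A nonvertical or vertical line, with explicit membership. -/
lemma exists_line_vert (a : ℝ) : ∃ l : AffineSubspace ℝ (Fin 2 → ℝ),
    Module.finrank ℝ l.direction = 1 ∧ ∀ p, p 0 = a → p ∈ l := by
  refine ⟨affineSpan ℝ {![a, 0], ![a, 1]}, line_finrank ?_, ?_⟩
  · intro h
    simpa using congrFun h 1
  · intro p hp
    rw [mem_affineSpan_pair_iff_exists_lineMap_eq]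
    refine ⟨p 1, ?_⟩
    ext i
    fin_cases i <;> simp [AffineMap.lineMap_apply, hp]

lemma exists_line_slope (m b : ℝ) : ∃ l : AffineSubspace ℝ (Fin 2 → ℝ),
    Module.finrank ℝ l.direction = 1 ∧ ∀ p, p 1 - m * p 0 = b → p ∈ l := by
  refine ⟨affineSpan ℝ {![0, b], ![1, m + b]}, line_finrank ?_, ?_⟩
  · intro h
    simpa using congrFun h 0
  · intro p hp
    rw [mem_affineSpan_pair_iff_exists_lineMap_eq]
    refine ⟨p 0, ?_⟩
    ext i
    fin_cases i
    · simp [AffineMap.lineMap_apply]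
    · simp [AffineMap.lineMap_apply]; linarith

/-- A line misses one of the four open quadrants. -/
lemma miss_quadrant {l : AffineSubspace ℝ (Fin 2 → ℝ)} (hl : l ∈ Set.range
      (fun z : (Fin 2 → ℝ) × (Fin 2 → ℝ) => affineSpan ℝ {z.1, z.2})) (a m b : ℝ) :
    (∀ p ∈ l, ¬ (p 0 < a ∧ p 1 - m * p 0 < b)) ∨ (∀ p ∈ l, ¬ (p 0 < a ∧ b < p 1 - m * p 0)) ∨
    (∀ p ∈ l, ¬ (a < p 0 ∧ p 1 - m * p 0 < b)) ∨ (∀ p ∈ l, ¬ (a < p 0 ∧ b < p 1 - m * p 0)) := by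
  obtain ⟨⟨u, w⟩, rfl⟩ := hl
  obtain ⟨α, hα⟩ : ∃ α : ℝ, α = w 0 - u 0 := ⟨_, rfl⟩
  obtain ⟨γ, hγ⟩ : ∃ γ : ℝ, γ = (w 1 - m * w 0) - (u 1 - m * u 0) := ⟨_, rfl⟩
  have hconst : ∀ p ∈ affineSpan ℝ {u, w},
      γ * (p 0 - a) - α * (p 1 - m * p 0 - b) = γ * (u 0 - a) - α * (u 1 - m * u 0 - b) := by
    intro p hp
    rw [mem_affineSpan_pair_iff_exists_lineMap_eq] at hp
    obtain ⟨t, rfl⟩ := hp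
    simp only [AffineMap.lineMap_apply, vsub_eq_sub, vadd_eq_add, Pi.add_apply, Pi.smul_apply,
      Pi.sub_apply, smul_eq_mul]
    rw [hα, hγ]; ring
  by_contra hcon
  push Not at hcon
  obtain ⟨⟨p1, h1, x1, y1⟩, ⟨p2, h2, x2, y2⟩, ⟨p3, h3, x3, y3⟩, ⟨p4, h4, x4, y4⟩⟩ := hcon
  by_cases hz : α = 0 ∧ γ = 0
  · obtain ⟨z1, z2⟩ := hz
    have hu : ∀ p ∈ affineSpan ℝ {u, w}, p 0 = u 0 := by
      intro p hp
      rw [mem_affineSpan_pair_iff_exists_lineMap_eq] at hp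
      obtain ⟨t, rfl⟩ := hp
      simp only [AffineMap.lineMap_apply, vsub_eq_sub, vadd_eq_add, Pi.add_apply, Pi.smul_apply,
        Pi.sub_apply, smul_eq_mul]
      rw [← hα, z1]; ring
    have := hu p1 h1
    have := hu p3 h3
    linarith
  have e1 := hconst p1 h1
  have e2 := hconst p2 h2
  have e3 := hconst p3 h3
  have e4 := hconst p4 h4
  generalize γ * (u 0 - a) - α * (u 1 - m * u 0 - b) = κ at *
  have lem : ∀ {c d x y x' y' : ℝ}, 0 ≤ c → 0 ≤ d → (0 < c ∨ 0 < d) → 0 < x → 0 < y → x' < 0 →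
      y' < 0 → c * x + d * y = c * x' + d * y' → False := by
    intro c d x y x' y' hc hd h hx hy hx' hy' he
    have q1 : 0 ≤ c * (x - x') := mul_nonneg hc (by linarith)
    have q2 : 0 ≤ d * (y - y') := mul_nonneg hd (by linarith)
    rcases h with h | h
    · have : 0 < c * (x - x') := mul_pos h (by linarith)
      linarith
    · have : 0 < d * (y - y') := mul_pos h (by linarith)
      linarith
  rcases le_total 0 α with ha | ha <;> rcases le_total 0 γ with hg | hg
  · -- use p2 , p3
    refine lem (c := γ) (d := α) (x := p3 0 - a) (y := -(p3 1 - m * p3 0 - b)) (x' := p2 0 - a)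
      (y' := -(p2 1 - m * p2 0 - b)) hg ha ?_ (by linarith) (by linarith) (by linarith)
      (by linarith) (by linarith)
    by_contra! hh
    exact hz ⟨by linarith, by linarith⟩
  · refine lem (c := -γ) (d := α) (x := p4 0 - a) (y := (p4 1 - m * p4 0 - b)) (x' := p1 0 - a)
      (y' := (p1 1 - m * p1 0 - b)) (by linarith) ha ?_ (by linarith) (by linarith) (by linarith)
      (by linarith) (by linarith)
    by_contra! hh
    exact hz ⟨by linarith, by linarith⟩
  · refine lem (c := γ) (d := -α) (x := p4 0 - a) (y := (p4 1 - m * p4 0 - b)) (x' := p1 0 - a)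
      (y' := (p1 1 - m * p1 0 - b)) hg (by linarith) ?_ (by linarith) (by linarith) (by linarith)
      (by linarith) (by linarith)
    by_contra! hh
    exact hz ⟨by linarith, by linarith⟩
  · refine lem (c := -γ) (d := -α) (x := p3 0 - a) (y := -(p3 1 - m * p3 0 - b)) (x' := p2 0 - a)
      (y' := -(p2 1 - m * p2 0 - b)) (by linarith) (by linarith) ?_ (by linarith) (by linarith)
      (by linarith) (by linarith) (by linarith)
    by_contra! hh
    exact hz ⟨by linarith, by linarith⟩

lemma nat_mul_pred_nonneg (c : ℕ) : (0 : ℝ) ≤ (c : ℝ) * (c - 1) := by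
  rcases Nat.eq_zero_or_pos c with h | h
  · simp [h]
  · have : (1 : ℝ) ≤ c := by exact_mod_cast h
    nlinarith

lemma three_ineq (x y z k : ℝ) (hx : 0 ≤ x) (hy : 0 ≤ y) (hz : 0 ≤ z) (hk : 1 ≤ k)
    (h : k ≤ x + y + z + 2) :
    k * (k - 1) ≤ 7 / 2 * (x * (x - 1) + y * (y - 1) + z * (z - 1)) + 100 := by
  have h1 : (x + y + z) ^ 2 ≤ 3 * (x ^ 2 + y ^ 2 + z ^ 2) := by
    nlinarith [sq_nonneg (x - y), sq_nonneg (y - z), sq_nonneg (x - z)]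
  have h2 : k * (k - 1) ≤ (x + y + z + 2) * (x + y + z + 1) := by nlinarith
  nlinarith [sq_nonneg (x + y + z - 39 / 2)]

set_option maxHeartbeats 2000000 in
open Classical in
/-- No line is rich: quadratically many lines. -/
lemma case_two (S : Finset (Fin 2 → ℝ)) (n : ℝ) (hn : n = S.card) (hS : S.Nonempty)
    (h : ∀ l : AffineSubspace ℝ (Fin 2 → ℝ), Module.finrank ℝ l.direction = 1 →
      ((S.filter (· ∈ l)).card : ℝ) < n / 20) :
    n ^ 2 / 2000 < (spLines S).card := by
  obtain ⟨p₀, hp₀⟩ := hS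
  have hn20 : 20 < n := by
    obtain ⟨l, hl, hpl⟩ := exists_line_vert (p₀ 0)
    have h1 := h l hl
    have : 0 < (S.filter (· ∈ l)).card :=
      Finset.card_pos.2 ⟨p₀, Finset.mem_filter.2 ⟨hp₀, hpl p₀ rfl⟩⟩
    have : (1 : ℝ) ≤ (S.filter (· ∈ l)).card := by exact_mod_cast this
    linarith
  obtain ⟨μ, -, hμ⟩ := exists_median S ⟨p₀, hp₀⟩ (fun _ p => p 0) (fun _ => continuous_const)
  obtain ⟨hA, hB, -, -⟩ := hμ 0
  generalize μ 0 = a at *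
  set A := S.filter (fun p => p 0 < a) with hAdef
  set B := S.filter (fun p => a < p 0) with hBdef
  obtain ⟨H1, hH1, hm1⟩ := exists_line_vert a
  have hcov : S.card ≤ A.card + B.card + (S.filter (· ∈ H1)).card := by
    have : S ⊆ A ∪ B ∪ S.filter (· ∈ H1) := by
      intro p hp
      simp only [Finset.mem_union, Finset.mem_filter, hAdef, hBdef]
      rcases lt_trichotomy (p 0) a with h | h | h
      · exact Or.inl (Or.inl ⟨hp, h⟩)
      · exact Or.inr ⟨hp, hm1 p h⟩
      · exact Or.inl (Or.inr ⟨hp, h⟩)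
    exact (Finset.card_le_card this).trans ((Finset.card_union_le _ _).trans
      (Nat.add_le_add_right (Finset.card_union_le _ _) _))
  have hcov' : n ≤ A.card + B.card + (S.filter (· ∈ H1)).card := by
    rw [hn]; exact_mod_cast hcov
  have hA' : 2 * (A.card : ℝ) ≤ n := by rw [hn]; exact_mod_cast hA
  have hB' : 2 * (B.card : ℝ) ≤ n := by rw [hn]; exact_mod_cast hB
  have hH1c := h H1 hH1
  have hAne : A.Nonempty := by
    rw [← Finset.card_pos]
    have : (0 : ℝ) < A.card := by linarith
    exact_mod_cast this
  have hBne : B.Nonempty := by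
    rw [← Finset.card_pos]
    have : (0 : ℝ) < B.card := by linarith
    exact_mod_cast this
  obtain ⟨m, b, q1, q2, q3, q4⟩ := ham_sandwich A B hAne hBne a
    (fun p hp => (Finset.mem_filter.1 hp).2) (fun p hp => (Finset.mem_filter.1 hp).2)
  obtain ⟨H2, hH2, hm2⟩ := exists_line_slope m b
  have hH2c := h H2 hH2
  set Q1 := A.filter (fun p => p 1 - m * p 0 < b) with hQ1
  set Q2 := A.filter (fun p => b < p 1 - m * p 0) with hQ2
  set Q3 := B.filter (fun p => p 1 - m * p 0 < b) with hQ3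
  set Q4 := B.filter (fun p => b < p 1 - m * p 0) with hQ4
  have hAS : A ⊆ S := Finset.filter_subset _ _
  have hBS : B ⊆ S := Finset.filter_subset _ _
  have s1 : Q1 ⊆ S := (Finset.filter_subset _ _).trans hAS
  have s2 : Q2 ⊆ S := (Finset.filter_subset _ _).trans hAS
  have s3 : Q3 ⊆ S := (Finset.filter_subset _ _).trans hBS
  have s4 : Q4 ⊆ S := (Finset.filter_subset _ _).trans hBS
  have small : ∀ c d : ℕ, 2 * c ≤ d → 2 * (d : ℝ) ≤ n → (c : ℝ) * (c - 1) ≤ n ^ 2 / 16 := by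
    intro c d h1 h2
    have h3 : 2 * (c : ℝ) ≤ d := by exact_mod_cast h1
    have h4 : (0 : ℝ) ≤ c := Nat.cast_nonneg _
    nlinarith
  have t1 := small _ _ q1 hA'
  have t2 := small _ _ q2 hA'
  have t3 := small _ _ q3 hB'
  have t4 := small _ _ q4 hB'
  set K : Finset (Fin 2 → ℝ) → AffineSubspace ℝ (Fin 2 → ℝ) → ℝ :=
    fun Q l => ((Q.filter (· ∈ l)).card : ℝ) with hK
  have main : ∀ l ∈ spLines S, K S l * (K S l - 1) ≤
      7 / 2 * (K Q1 l * (K Q1 l - 1) + K Q2 l * (K Q2 l - 1) + K Q3 l * (K Q3 l - 1)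
        + K Q4 l * (K Q4 l - 1)) + 100 + (if l = H1 then n ^ 2 / 400 else 0)
        + (if l = H2 then n ^ 2 / 400 else 0) := by
    intro l hl
    obtain ⟨hl1, u, hu, w, hw, huw, hul, hwl⟩ := mem_spLines.1 hl
    have nn : ∀ Q, 0 ≤ K Q l * (K Q l - 1) := fun Q => nat_mul_pred_nonneg _
    have n1 := nn Q1
    have n2 := nn Q2
    have n3 := nn Q3
    have n4 := nn Q4
    have hKS : K S l < n / 20 := h l hl1
    have hKS0 : 1 ≤ K S l := by
      have : 0 < (S.filter (· ∈ l)).card := Finset.card_pos.2 ⟨u, Finset.mem_filter.2 ⟨hu, hul⟩⟩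
      simp only [hK]
      exact_mod_cast this
    have hbig : K S l * (K S l - 1) ≤ n ^ 2 / 400 := by nlinarith
    have i1 : (0 : ℝ) ≤ if l = H1 then n ^ 2 / 400 else 0 := by split_ifs <;> positivity
    have i2 : (0 : ℝ) ≤ if l = H2 then n ^ 2 / 400 else 0 := by split_ifs <;> positivity
    by_cases e1 : l = H1
    · rw [if_pos e1]; linarith
    by_cases e2 : l = H2
    · rw [if_pos e2]; linarith
    have one : ∀ H : AffineSubspace ℝ (Fin 2 → ℝ), Module.finrank ℝ H.direction = 1 → l ≠ H →
        ((S.filter (· ∈ l)).filter (· ∈ H)).card ≤ 1 := by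
      intro H hH hne
      rw [Finset.card_le_one]
      intro x hx y hy
      simp only [Finset.mem_filter] at hx hy
      by_contra hxy
      exact hne ((line_unique hl1 hxy hx.1.2 hy.1.2).symm.trans (line_unique hH hxy hx.2 hy.2))
    have o1 := one H1 hH1 e1
    have o2 := one H2 hH2 e2
    have hsum : (S.filter (· ∈ l)).card ≤ (Q1.filter (· ∈ l)).card + (Q2.filter (· ∈ l)).card
        + (Q3.filter (· ∈ l)).card + (Q4.filter (· ∈ l)).card + 2 := by
      have hsub : S.filter (· ∈ l) ⊆ Q1.filter (· ∈ l) ∪ Q2.filter (· ∈ l) ∪ Q3.filter (· ∈ l)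
          ∪ Q4.filter (· ∈ l) ∪ (S.filter (· ∈ l)).filter (· ∈ H1)
          ∪ (S.filter (· ∈ l)).filter (· ∈ H2) := by
        intro p hp
        obtain ⟨hpS, hpl⟩ := Finset.mem_filter.1 hp
        have c1 := hm1 p
        have c2 := hm2 p
        simp only [Finset.mem_union, Finset.mem_filter, hQ1, hQ2, hQ3, hQ4, hAdef, hBdef, hpS, hpl,
          true_and, and_true]
        rcases lt_trichotomy (p 0) a with h | h | h <;>
          rcases lt_trichotomy (p 1 - m * p 0) b with h' | h' | h' <;> tauto
      have := Finset.card_le_card hsub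
      have r1 := Finset.card_union_le (Q1.filter (· ∈ l) ∪ Q2.filter (· ∈ l) ∪ Q3.filter (· ∈ l)
          ∪ Q4.filter (· ∈ l) ∪ (S.filter (· ∈ l)).filter (· ∈ H1))
          ((S.filter (· ∈ l)).filter (· ∈ H2))
      have r2 := Finset.card_union_le (Q1.filter (· ∈ l) ∪ Q2.filter (· ∈ l) ∪ Q3.filter (· ∈ l)
          ∪ Q4.filter (· ∈ l)) ((S.filter (· ∈ l)).filter (· ∈ H1))
      have r3 := Finset.card_union_le (Q1.filter (· ∈ l) ∪ Q2.filter (· ∈ l) ∪ Q3.filter (· ∈ l))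
          (Q4.filter (· ∈ l))
      have r4 := Finset.card_union_le (Q1.filter (· ∈ l) ∪ Q2.filter (· ∈ l)) (Q3.filter (· ∈ l))
      have r5 := Finset.card_union_le (Q1.filter (· ∈ l)) (Q2.filter (· ∈ l))
      omega
    have hsum' : K S l ≤ K Q1 l + K Q2 l + K Q3 l + K Q4 l + 2 := by
      simp only [hK]
      exact_mod_cast hsum
    have pos : ∀ Q, 0 ≤ K Q l := fun Q => Nat.cast_nonneg _
    have zero : ∀ Q : Finset (Fin 2 → ℝ), (∀ p ∈ l, p ∉ Q) → K Q l = 0 := by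
      intro Q hQ
      simp only [hK, Nat.cast_eq_zero, Finset.card_eq_zero, Finset.filter_eq_empty_iff]
      exact fun p hp hpl => hQ p hpl hp
    have hrange : l ∈ Set.range
        (fun z : (Fin 2 → ℝ) × (Fin 2 → ℝ) => affineSpan ℝ {z.1, z.2}) :=
      ⟨(u, w), line_unique hl1 huw hul hwl⟩
    rcases miss_quadrant hrange a m b with hq | hq | hq | hq
    · have z := zero Q1 (fun p hp hpQ => by
        simp only [hQ1, hAdef, Finset.mem_filter] at hpQ
        exact hq p hp ⟨hpQ.1.2, hpQ.2⟩)
      rw [z] at hsum' ⊢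
      have := three_ineq _ _ _ _ (pos Q2) (pos Q3) (pos Q4) hKS0 (by linarith)
      linarith
    · have z := zero Q2 (fun p hp hpQ => by
        simp only [hQ2, hAdef, Finset.mem_filter] at hpQ
        exact hq p hp ⟨hpQ.1.2, hpQ.2⟩)
      rw [z] at hsum' ⊢
      have := three_ineq _ _ _ _ (pos Q1) (pos Q3) (pos Q4) hKS0 (by linarith)
      linarith
    · have z := zero Q3 (fun p hp hpQ => by
        simp only [hQ3, hBdef, Finset.mem_filter] at hpQ
        exact hq p hp ⟨hpQ.1.2, hpQ.2⟩)
      rw [z] at hsum' ⊢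
      have := three_ineq _ _ _ _ (pos Q1) (pos Q2) (pos Q4) hKS0 (by linarith)
      linarith
    · have z := zero Q4 (fun p hp hpQ => by
        simp only [hQ4, hBdef, Finset.mem_filter] at hpQ
        exact hq p hp ⟨hpQ.1.2, hpQ.2⟩)
      rw [z] at hsum' ⊢
      have := three_ineq _ _ _ _ (pos Q1) (pos Q2) (pos Q3) hKS0 (by linarith)
      linarith
  have tot := Finset.sum_le_sum main
  simp only [Finset.sum_add_distrib, ← Finset.mul_sum, Finset.sum_const, nsmul_eq_mul] at tot
  have pS : ∑ l ∈ spLines S, K S l * (K S l - 1) = _ := pair_count (Finset.Subset.refl S)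
  have p1 : ∑ l ∈ spLines S, K Q1 l * (K Q1 l - 1) = _ := pair_count s1
  have p2 : ∑ l ∈ spLines S, K Q2 l * (K Q2 l - 1) = _ := pair_count s2
  have p3 : ∑ l ∈ spLines S, K Q3 l * (K Q3 l - 1) = _ := pair_count s3
  have p4 : ∑ l ∈ spLines S, K Q4 l * (K Q4 l - 1) = _ := pair_count s4
  rw [pS, p1, p2, p3, p4, ← hn] at tot
  have ite_le : ∀ H : AffineSubspace ℝ (Fin 2 → ℝ),
      ∑ l ∈ spLines S, (if l = H then n ^ 2 / 400 else 0) ≤ n ^ 2 / 400 := by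
    intro H
    rw [Finset.sum_ite_eq']
    split_ifs
    · exact le_rfl
    · positivity
  have g1 := ite_le H1
  have g2 := ite_le H2
  nlinarith


/-- corollary of Erdős–Beck: for each `β ∈ (0,1)` there is `γ > 0` such that
for any set `S` of `n` points in the plane, either some line contains at least `βn` points of
`S`, or the number of lines spanned by `S` exceeds `γn²`. -/
theorem erdos_beck_corollary (β : ℝ) (hβ0 : 0 < β) (hβ1 : β < 1) :
    ∃ γ : ℝ, 0 < γ ∧
      ∀ (n : ℕ) (S : Finset (Fin 2 → ℝ)), S.card = n →
        (∃ l : AffineSubspace ℝ (Fin 2 → ℝ), Module.finrank ℝ l.direction = 1 ∧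
            ((((↑S : Set (Fin 2 → ℝ)) ∩ ↑l).ncard : ℝ) ≥ β * n)) ∨
        ({l : AffineSubspace ℝ (Fin 2 → ℝ) |
            Module.finrank ℝ l.direction = 1 ∧
            ∃ p₁ ∈ S, ∃ p₂ ∈ S, p₁ ≠ p₂ ∧ p₁ ∈ l ∧ p₂ ∈ l}.ncard : ℝ) > γ * (n : ℝ) ^ 2 := by
  classical
  refine ⟨(1 - β) / 2000, by linarith, ?_⟩
  intro n S hn
  have hset : {l : AffineSubspace ℝ (Fin 2 → ℝ) |
            Module.finrank ℝ l.direction = 1 ∧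
            ∃ p₁ ∈ S, ∃ p₂ ∈ S, p₁ ≠ p₂ ∧ p₁ ∈ l ∧ p₂ ∈ l} = ↑(spLines S) := by
    ext l
    rw [Finset.mem_coe, mem_spLines]
    rfl
  have hcard : ∀ l : AffineSubspace ℝ (Fin 2 → ℝ),
      ((↑S : Set (Fin 2 → ℝ)) ∩ ↑l).ncard = (S.filter (· ∈ l)).card := by
    intro l
    rw [← Set.ncard_coe_finset]
    congr 1
    ext p
    simp
  rw [hset, Set.ncard_coe_finset, or_iff_not_imp_left]
  intro hcon
  push Not at hcon
  simp only [hcard] at hcon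
  have hSne : S.Nonempty := by
    by_contra hS
    rw [Finset.not_nonempty_iff_eq_empty] at hS
    subst hS
    obtain ⟨l, hl, -⟩ := exists_line_vert 0
    have := hcon l hl
    simp at hn
    subst hn
    simp at this
  have hn0 : (0 : ℝ) < n := by
    rw [← hn]
    exact_mod_cast hSne.card_pos
  by_cases hc : ∀ l : AffineSubspace ℝ (Fin 2 → ℝ), Module.finrank ℝ l.direction = 1 →
      ((S.filter (· ∈ l)).card : ℝ) < (n : ℝ) / 20
  · have := case_two S n (by rw [hn]) hSne hc
    have h2 : (0 : ℝ) < (n : ℝ) ^ 2 := by positivity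
    nlinarith
  · push Not at hc
    obtain ⟨l, hl, hk⟩ := hc
    have hk2 := hcon l hl
    have hsum : (S.filter (· ∈ l)).card + (S.filter (· ∉ l)).card = n := by
      rw [← hn]; exact Finset.card_filter_add_card_filter_not _
    have hsum' : ((S.filter (· ∈ l)).card : ℝ) + (S.filter (· ∉ l)).card = n := by
      exact_mod_cast hsum
    obtain ⟨k, hkd⟩ : ∃ k : ℝ, k = (S.filter (· ∈ l)).card := ⟨_, rfl⟩
    obtain ⟨m, hmd⟩ : ∃ m : ℝ, m = (S.filter (· ∉ l)).card := ⟨_, rfl⟩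
    rw [← hkd] at hk hk2 hsum'
    rw [← hmd] at hsum'
    have hm : (1 - β) * n < m := by linarith
    have hm0 : 0 < m := lt_trans (mul_pos (by linarith) hn0) hm
    have h1 := case_one S l hl m k hkd hmd hm0
    have h2 : m + k = n := by linarith
    rw [h2] at h1
    have h3 : ((n : ℝ) / 20) ^ 2 ≤ k ^ 2 := by gcongr
    have h4 : (1 - β) * n * ((n : ℝ) / 20) ^ 2 ≤ m * k ^ 2 := by gcongr
    have h5 : (1 - β) * ((n : ℝ) / 20) ^ 2 ≤ (spLines S).card := by
      refine le_of_mul_le_mul_right ?_ hn0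
      linarith
    have h6 : 0 < (1 - β) * (n : ℝ) ^ 2 := mul_pos (by linarith) (by positivity)
    change _ < _
    nlinarith
end
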